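/- Let β ∈ (σ,1). Then X*_β = (1 − β + β²)(β² + β − 1)/((2−β)(1+β)²) is strictly positive, satisfies F_β(X*_β) = X*_β, and is the unique strictly positive fixed point of F_β. (X*_β is the value of the gap n₂ − n₁ along the periodic orbit Γ on the indifference set J.) -/

import Mathlib

/-- The one-dimensional return map on the indifference set J of the Shapley
family. -/
noncomputable def retMap (β X : ℝ) : ℝ :=
  X*(1 + β)*(1 + 2*β)*(1 - β + β^2)
    / ((2 - β)*(3*(1 + β)^2*X + (2 + β)*(1 - β + β^2)))

/-! For `−1 < β < 2` and `X ≥ 0`, the difference `F_β(X) − X` is a positive multiple of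
`X (X*_β − X)`, so the only nonnegative points that can be fixed are `0` and `X*_β`. The sign of
`X*_β` is that of `β² + β − 1`, which factors as `(β + φ)(β + ψ)` with `φ` the golden ratio, `ψ` its
conjugate and `σ = −ψ`; hence `X*_β` is positive exactly when `β > σ`. -/

open Set

/-- The fixed point `X*_β` of the return map that branches off from `0` at `β = σ`; for `β ∈ (σ, 1)`
it is the gap along the periodic orbit `Γ`. -/
noncomputable def fixedGap (β : ℝ) : ℝ :=
  (1 - β + β ^ 2) * (β ^ 2 + β - 1) / ((2 - β) * (1 + β) ^ 2)

theorem one_sub_add_sq_pos {R : Type*} [CommRing R] [LinearOrder R] [IsStrictOrderedRing R]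
    (x : R) : 0 < 1 - x + x ^ 2 := by
  linarith [sq_nonneg (x - 1), sq_nonneg x]

theorem sq_add_self_sub_one_eq_mul (x : ℝ) :
    x ^ 2 + x - 1 = (x + Real.goldenRatio) * (x + Real.goldenConj) := by
  linear_combination -x * Real.goldenRatio_add_goldenConj - Real.goldenRatio_mul_goldenConj

theorem sq_add_self_sub_one_pos_iff {x : ℝ} (hx : -Real.goldenRatio < x) :
    0 < x ^ 2 + x - 1 ↔ -Real.goldenConj < x := by
  rw [sq_add_self_sub_one_eq_mul, mul_pos_iff_of_pos_left (neg_lt_iff_pos_add.1 hx),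
    neg_lt_iff_pos_add]

theorem fixedGap_pos_iff {β : ℝ} (hβ : β ∈ Ioo (-1) 2) :
    0 < fixedGap β ↔ -Real.goldenConj < β := by
  have hden : 0 < (2 - β) * (1 + β) ^ 2 :=
    mul_pos (sub_pos.2 hβ.2) (pow_pos (neg_lt_iff_pos_add'.1 hβ.1) 2)
  have hφ : -Real.goldenRatio < β := (neg_lt_neg Real.one_lt_goldenRatio).trans hβ.1
  rw [fixedGap, div_pos_iff_of_pos_right hden, mul_pos_iff_of_pos_left (one_sub_add_sq_pos β),
    sq_add_self_sub_one_pos_iff hφ]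

theorem retMap_sub_self {β X : ℝ} (hβ : 2 - β ≠ 0) (hβ' : 1 + β ≠ 0)
    (hden : 3 * (1 + β) ^ 2 * X + (2 + β) * (1 - β + β ^ 2) ≠ 0) :
    retMap β X - X = 3 * (1 + β) ^ 2 * X * (fixedGap β - X)
      / (3 * (1 + β) ^ 2 * X + (2 + β) * (1 - β + β ^ 2)) := by
  have hgap : (2 - β) * (1 + β) ^ 2 * fixedGap β = (1 - β + β ^ 2) * (β ^ 2 + β - 1) :=
    mul_div_cancel₀ _ (mul_ne_zero hβ (pow_ne_zero 2 hβ'))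
  rw [retMap, div_sub' (mul_ne_zero hβ hden), div_eq_div_iff (mul_ne_zero hβ hden) hden]
  linear_combination -3 * X * (3 * (1 + β) ^ 2 * X + (2 + β) * (1 - β + β ^ 2)) * hgap

theorem retMap_eq_self_iff {β X : ℝ} (hβ : β ∈ Ioo (-1) 2) (hX : 0 ≤ X) :
    retMap β X = X ↔ X = 0 ∨ X = fixedGap β := by
  have hsub : 0 < 2 - β := sub_pos.2 hβ.2
  have hadd : 0 < 1 + β := neg_lt_iff_pos_add'.1 hβ.1
  have hden : 0 < 3 * (1 + β) ^ 2 * X + (2 + β) * (1 - β + β ^ 2) :=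
    add_pos_of_nonneg_of_pos (by positivity) (mul_pos (by linarith) (one_sub_add_sq_pos β))
  have hcoeff : 3 * (1 + β) ^ 2 ≠ 0 := by positivity
  rw [← sub_eq_zero, retMap_sub_self hsub.ne' hadd.ne' hden.ne', div_eq_zero_iff,
    or_iff_left hden.ne', mul_eq_zero, mul_eq_zero_iff_left hcoeff, sub_eq_zero,
    eq_comm (a := fixedGap β)]

theorem stmt16_general {β : ℝ} (hβ : β ∈ Ioo (-1) 2) :
    (0 < fixedGap β ↔ (Real.sqrt 5 - 1) / 2 < β) ∧
    ∀ X : ℝ, 0 < X → (retMap β X = X ↔ X = fixedGap β) := by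
  have hσ : (Real.sqrt 5 - 1) / 2 = -Real.goldenConj := by
    rw [Real.goldenConj]
    ring
  refine ⟨hσ ▸ fixedGap_pos_iff hβ, fun X hX => ?_⟩
  rw [retMap_eq_self_iff hβ hX.le, or_iff_right hX.ne']

/-- for β ∈ (σ,1), σ = (√5−1)/2 the golden mean, the quantity
X*_β = (1−β+β²)(β²+β−1)/((2−β)(1+β)²) is positive and is the unique strictly
positive fixed point of the return map F_β. -/
theorem stmt16 (β : ℝ) (hβ : β ∈ Set.Ioo ((Real.sqrt 5 - 1)/2) 1) :
    0 < (1 - β + β^2)*(β^2 + β - 1)/((2 - β)*(1 + β)^2) ∧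
    retMap β ((1 - β + β^2)*(β^2 + β - 1)/((2 - β)*(1 + β)^2))
      = (1 - β + β^2)*(β^2 + β - 1)/((2 - β)*(1 + β)^2) ∧
    (∀ X : ℝ, 0 < X → retMap β X = X →
      X = (1 - β + β^2)*(β^2 + β - 1)/((2 - β)*(1 + β)^2)) := by
  obtain ⟨hpos, hfix⟩ := stmt16_general (β := β)
    ⟨by linarith [hβ.1, Real.sqrt_nonneg 5], hβ.2.trans one_lt_two⟩
  exact ⟨hpos.2 hβ.1, (hfix _ (hpos.2 hβ.1)).2 rfl, fun X hX => (hfix X hX).1⟩
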